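/- Under any uniformly avoiding source μ, for every fixed k-tuple α ∈ (Fin σ)^k and all indices i, j with k ≤ i and i + k ≤ j, the probability that α occurs both at position i and at position j satisfies μ(W_i = α and W_j = α) ≤ 1/(σ-k)^{2k}. -/

import Mathlib

open MeasureTheory ProbabilityTheory
open scoped Classical ENNReal

noncomputable section

/-- The `k`-window at position `i` of an infinite string `ω : ℕ → Fin σ`. -/
def Window {σ : ℕ} (k i : ℕ) (ω : ℕ → Fin σ) : Fin k → Fin σ :=
  fun t => ω (i + t)

/-- A *uniformly avoiding source*: a probability measure `μ` on `ℕ → Fin σ`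
(with the product σ-algebra) such that (i) almost surely the first `k`
coordinates are pairwise distinct, and (ii) conditioned on any positive-probability
history of length `n ≥ k` whose last `k` entries are pairwise distinct, the next
character is uniform on the `σ - k` characters not among the last `k` entries. -/
def UniformlyAvoiding {σ : ℕ} (k : ℕ) (μ : Measure (ℕ → Fin σ)) : Prop :=
  IsProbabilityMeasure μ ∧
  (∀ᵐ ω ∂μ, ∀ i j : ℕ, i < k → j < k → i ≠ j → ω i ≠ ω j) ∧
  ∀ n : ℕ, k ≤ n → ∀ a : ℕ → Fin σ,
    μ {ω | ∀ t < n, ω t = a t} ≠ 0 →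
    (∀ p q : ℕ, n - k ≤ p → p < n → n - k ≤ q → q < n → p ≠ q → a p ≠ a q) →
    ∀ b : Fin σ,
      (μ[|{ω | ∀ t < n, ω t = a t}]) {ω | ω n = b} =
        if ∃ t : ℕ, n - k ≤ t ∧ t < n ∧ a t = b then 0
        else 1 / ((σ - k : ℕ) : ℝ≥0∞)

theorem cyl_meas {σ : ℕ} (n : ℕ) (a : ℕ → Fin σ) :
    MeasurableSet {ω : ℕ → Fin σ | ∀ t < n, ω t = a t} := by
  have : {ω : ℕ → Fin σ | ∀ t < n, ω t = a t} = ⋂ t, ⋂ (_ : t < n), {ω | ω t = a t} := by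
    ext ω; simp
  rw [this]
  refine MeasurableSet.iInter fun t => MeasurableSet.iInter fun _ => ?_
  exact measurableSet_eq_fun (measurable_pi_apply t) measurable_const

theorem cyl_good {σ k : ℕ} (μ : Measure (ℕ → Fin σ)) (hμ : UniformlyAvoiding k μ)
    (n : ℕ) (hn : k ≤ n) (a : ℕ → Fin σ) :
    μ {ω | ∀ t < n, ω t = a t} ≠ 0 →
    (∀ p q : ℕ, n - k ≤ p → p < n → n - k ≤ q → q < n → p ≠ q → a p ≠ a q) := by
  obtain ⟨hp, h1, h2⟩ := hμ
  induction n, hn using Nat.le_induction with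
  | base =>
    intro h0 p q _ hp' _ hq' hpq heq
    apply h0
    refine measure_mono_null ?_ (ae_iff.mp h1)
    intro ω hω hc
    exact hc p q hp' hq' hpq (by rw [hω p hp', hω q hq', heq])
  | succ n hn ih =>
    intro h0
    have hsub : {ω : ℕ → Fin σ | ∀ t < n + 1, ω t = a t} ⊆ {ω | ∀ t < n, ω t = a t} :=
      fun ω hω t ht => hω t (by omega)
    have hC : μ {ω | ∀ t < n, ω t = a t} ≠ 0 := fun h => h0 (measure_mono_null hsub h)
    have hd := ih hC
    have hb := h2 n hn a hC hd (a n)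
    have hnew : ¬ ∃ t : ℕ, n - k ≤ t ∧ t < n ∧ a t = a n := by
      intro hex
      rw [if_pos hex, cond_apply (cyl_meas n a)] at hb
      rcases mul_eq_zero.mp hb with h | h
      · exact (measure_ne_top μ _) (ENNReal.inv_eq_zero.mp h)
      · apply h0
        refine measure_mono_null ?_ h
        intro ω hω
        exact ⟨hsub hω, hω n (by omega)⟩
    intro p q hp1 hp2 hq1 hq2 hpq heq
    rcases Nat.lt_succ_iff_lt_or_eq.mp hp2 with h | h
    · rcases Nat.lt_succ_iff_lt_or_eq.mp hq2 with h' | h'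
      · exact hd p q (by omega) h (by omega) h' hpq heq
      · subst h'
        exact hnew ⟨p, by omega, h, heq⟩
    · subst h
      exact hnew ⟨q, by omega, by omega, heq.symm⟩

theorem cyl_step {σ k : ℕ} (μ : Measure (ℕ → Fin σ)) (hμ : UniformlyAvoiding k μ)
    (n : ℕ) (hn : k ≤ n) (a : ℕ → Fin σ) (b : Fin σ) :
    μ ({ω | ∀ t < n, ω t = a t} ∩ {ω | ω n = b}) ≤
      1 / ((σ - k : ℕ) : ℝ≥0∞) * μ {ω | ∀ t < n, ω t = a t} := by
  have hp : IsProbabilityMeasure μ := hμ.1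
  by_cases h0 : μ {ω | ∀ t < n, ω t = a t} = 0
  · rw [measure_mono_null Set.inter_subset_left h0]; exact zero_le
  · have hb := hμ.2.2 n hn a h0 (cyl_good μ hμ n hn a h0) b
    rw [← cond_mul_eq_inter (cyl_meas n a), hb]
    gcongr
    split_ifs <;> simp

theorem set_step {σ k : ℕ} (hσ : k < σ) (μ : Measure (ℕ → Fin σ)) (hμ : UniformlyAvoiding k μ)
    (n : ℕ) (hn : k ≤ n) (S : Set (ℕ → Fin σ))
    (hS : ∀ ω ω' : ℕ → Fin σ, (∀ t < n, ω t = ω' t) → ω ∈ S → ω' ∈ S) (b : Fin σ) :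
    μ (S ∩ {ω | ω n = b}) ≤ 1 / ((σ - k : ℕ) : ℝ≥0∞) * μ S := by
  let e : (Fin n → Fin σ) → ℕ → Fin σ :=
    fun a t => if h : t < n then a ⟨t, h⟩ else ⟨0, by omega⟩
  let T : Finset (Fin n → Fin σ) := Finset.univ.filter fun a => e a ∈ S
  let C : (Fin n → Fin σ) → Set (ℕ → Fin σ) := fun a => {ω | ∀ t < n, ω t = e a t}
  have hU : S = ⋃ a ∈ T, C a := by
    ext ω
    simp only [Set.mem_iUnion, exists_prop]
    constructor
    · intro h
      have hω : ∀ t < n, ω t = e (fun s => ω s) t := by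
        intro t ht
        simp [e, ht]
      exact ⟨fun s => ω s, by simpa [T] using hS _ _ hω h, hω⟩
    · rintro ⟨a, ha, hω⟩
      exact hS (e a) ω (fun t ht => (hω t ht).symm) (by simpa [T] using ha)
  have hdis : (T : Set (Fin n → Fin σ)).PairwiseDisjoint C := by
    intro a _ a' _ hne
    refine Set.disjoint_left.mpr fun ω h h' => hne ?_
    funext s
    have := (h s s.2).symm.trans (h' s s.2)
    simpa [e] using this
  have hsum : μ S = ∑ a ∈ T, μ (C a) := by
    conv_lhs => rw [hU]
    exact measure_biUnion_finset hdis fun a _ => cyl_meas n _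
  calc μ (S ∩ {ω | ω n = b}) = μ (⋃ a ∈ T, (C a ∩ {ω | ω n = b})) := by
        conv_lhs => rw [hU]
        simp only [Set.iUnion_inter]
    _ ≤ ∑ a ∈ T, μ (C a ∩ {ω | ω n = b}) := measure_biUnion_finset_le _ _
    _ ≤ ∑ a ∈ T, 1 / ((σ - k : ℕ) : ℝ≥0∞) * μ (C a) :=
        Finset.sum_le_sum fun a _ => cyl_step μ hμ n hn _ b
    _ = _ := by rw [hsum, Finset.mul_sum]

theorem finset_bound {σ k : ℕ} (hσ : k < σ) (μ : Measure (ℕ → Fin σ))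
    (hμ : UniformlyAvoiding k μ) (c : ℕ → Fin σ) (P : Finset ℕ) :
    (∀ t ∈ P, k ≤ t) →
    μ {ω | ∀ t ∈ P, ω t = c t} ≤ (1 / ((σ - k : ℕ) : ℝ≥0∞)) ^ P.card := by
  have hp : IsProbabilityMeasure μ := hμ.1
  induction P using Finset.induction_on_max with
  | empty => intro _; simp
  | insert n P hmax ih =>
    intro hP
    have hn : n ∉ P := fun h => lt_irrefl _ (hmax n h)
    rw [Finset.card_insert_of_notMem hn, pow_succ']
    have heq : {ω : ℕ → Fin σ | ∀ t ∈ insert n P, ω t = c t} =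
        {ω | ∀ t ∈ P, ω t = c t} ∩ {ω | ω n = c n} := by
      ext ω
      simp [and_comm]
    rw [heq]
    refine (set_step hσ μ hμ n (hP n (by simp)) _ ?_ (c n)).trans ?_
    · intro ω ω' h hω t ht
      rw [← h t (hmax t ht)]; exact hω t ht
    · gcongr
      exact ih fun t ht => hP t (by simp [ht])

/-- Under any uniformly avoiding source `μ`, for every fixed `k`-tuple `α` and indices
`k ≤ i` and `i + k ≤ j`, the probability that `α` occurs at both positions `i` and `j`
is at most `1/(σ-k)^(2k)`. -/
theorem double_occurrence_prob_le {σ k : ℕ} (hk : 1 ≤ k) (hσ : k < σ)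
    (μ : Measure (ℕ → Fin σ)) (hμ : UniformlyAvoiding k μ)
    (α : Fin k → Fin σ) (i j : ℕ) (hi : k ≤ i) (hj : i + k ≤ j) :
    μ {ω | Window k i ω = α ∧ Window k j ω = α} ≤ 1 / ((σ - k : ℕ) : ℝ≥0∞) ^ (2 * k) := by
  let c : ℕ → Fin σ := fun t =>
    if h : i ≤ t ∧ t < i + k then α ⟨t - i, by omega⟩
    else if h' : j ≤ t ∧ t < j + k then α ⟨t - j, by omega⟩ else ⟨0, by omega⟩
  have hcard : (Finset.Ico i (i + k) ∪ Finset.Ico j (j + k)).card = 2 * k := by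
    rw [Finset.card_union_of_disjoint]
    · simp; omega
    · rw [Finset.disjoint_left]
      intro t h h'
      simp only [Finset.mem_Ico] at h h'
      omega
  have hb := finset_bound hσ μ hμ c (Finset.Ico i (i + k) ∪ Finset.Ico j (j + k)) (by
    intro t ht
    simp only [Finset.mem_union, Finset.mem_Ico] at ht
    omega)
  rw [hcard] at hb
  have hr : 1 / ((σ - k : ℕ) : ℝ≥0∞) ^ (2 * k) = (1 / ((σ - k : ℕ) : ℝ≥0∞)) ^ (2 * k) := by
    simp only [one_div, ENNReal.inv_pow]
  rw [hr]
  refine (measure_mono ?_).trans hb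
  rintro ω ⟨h1, h2⟩ t ht
  by_cases h : i ≤ t ∧ t < i + k
  · have := congrFun h1 ⟨t - i, by omega⟩
    simp only [Window, Nat.add_sub_cancel' h.1] at this
    simp only [c, dif_pos h, this]
  · have h' : j ≤ t ∧ t < j + k := by
      simp only [Finset.mem_union, Finset.mem_Ico] at ht
      omega
    have := congrFun h2 ⟨t - j, by omega⟩
    simp only [Window, Nat.add_sub_cancel' h'.1] at this
    simp only [c, dif_neg h, dif_pos h', this]
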